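/- Let 0 ≤ s < 1/2. There exists C > 0 such that for every finitely supported real sequence (a_n)_{n≥0}, if f(t) = ∑_{n≥0} a_n·cos(nt) and b_m = (2/π)·∫₀^π f(t)·sin(mt) dt for m ≥ 1, then ∑_{m≥1} m^{2s}·b_m² ≤ C · ∑_{n≥0} (1+n)^{2s}·a_n². -/

import Mathlib

open Real

/-!
Up to the factor `2 / π`, the sine coefficients of `f` are obtained from its cosine coefficients by
the matrix `K m n = ∫ t in 0..π, cos (n * t) * sin (m * t)`. Orthogonality of the cosines and of the
sines shows that `K` is bounded on `ℓ²`, which is the case `s = 0`. Since moreover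
`|m - n| * |K m n| ≤ 2`, the commutator of `K` with the weight `(n + 1) ^ s` is controlled by the
Hilbert matrix `H m n = 1 / ((m + 1) + (n + 1))`: with `x = m + 1` and `y = n + 1`, the inequality
`|x ^ s - y ^ s| * (x + y) ≤ |x - y| * (x ^ s + y ^ s)` gives
`|x ^ s - y ^ s| * |K m n| ≤ 2 * (x ^ s + y ^ s) * H m n`. By the Schur test, `H` is bounded on the
weighted space with weight `(n + 1) ^ (2 * s)` for `|s| < 1 / 2`.
-/

section SchurTest

variable {ι κ : Type*} {S : Finset κ} {M : Finset ι}

theorem sq_sum_mul_le_of_sum_mul_le {k q : κ → ℝ} {A : ℝ} (hk : ∀ n, 0 ≤ k n)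
    (hq : ∀ n, 0 < q n) (hA : ∑ n ∈ S, k n * q n ≤ A) (f : κ → ℝ) :
    (∑ n ∈ S, k n * f n) ^ 2 ≤ A * ∑ n ∈ S, k n * (f n ^ 2 / q n) := by
  have hnonneg : ∀ n, 0 ≤ k n * (f n ^ 2 / q n) := fun n =>
    mul_nonneg (hk n) (div_nonneg (sq_nonneg _) (hq n).le)
  calc (∑ n ∈ S, k n * f n) ^ 2
      ≤ (∑ n ∈ S, k n * q n) * ∑ n ∈ S, k n * (f n ^ 2 / q n) := by
        refine Finset.sum_sq_le_sum_mul_sum_of_sq_le_mul S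
          (fun n _ => mul_nonneg (hk n) (hq n).le) (fun n _ => hnonneg n) fun n _ => le_of_eq ?_
        have := (hq n).ne'
        field_simp
    _ ≤ A * ∑ n ∈ S, k n * (f n ^ 2 / q n) :=
        mul_le_mul_of_nonneg_right hA (Finset.sum_nonneg fun n _ => hnonneg n)

theorem schur_test {k : ι → κ → ℝ} {p w : ι → ℝ} {q v : κ → ℝ} {A B : ℝ}
    (hk : ∀ m n, 0 ≤ k m n) (hq : ∀ n, 0 < q n) (hw : ∀ m, 0 ≤ w m) (hA : 0 ≤ A)
    (hrow : ∀ m, ∑ n ∈ S, k m n * q n ≤ A * p m)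
    (hcol : ∀ n, ∑ m ∈ M, k m n * (w m * p m) ≤ B * (v n * q n)) (f : κ → ℝ) :
    ∑ m ∈ M, w m * (∑ n ∈ S, k m n * f n) ^ 2 ≤ A * B * ∑ n ∈ S, v n * f n ^ 2 :=
  calc ∑ m ∈ M, w m * (∑ n ∈ S, k m n * f n) ^ 2
      ≤ ∑ m ∈ M, w m * (A * p m * ∑ n ∈ S, k m n * (f n ^ 2 / q n)) :=
        Finset.sum_le_sum fun m _ => mul_le_mul_of_nonneg_left
          (sq_sum_mul_le_of_sum_mul_le (hk m) hq (hrow m) f) (hw m)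
    _ = A * ∑ n ∈ S, (∑ m ∈ M, k m n * (w m * p m)) * (f n ^ 2 / q n) := by
        simp_rw [Finset.sum_mul, Finset.mul_sum]
        rw [Finset.sum_comm]
        exact Finset.sum_congr rfl fun n _ => Finset.sum_congr rfl fun m _ => by ring
    _ ≤ A * ∑ n ∈ S, B * (v n * q n) * (f n ^ 2 / q n) := by
        gcongr with n
        · exact div_nonneg (sq_nonneg _) (hq n).le
        · exact hcol n
    _ = A * B * ∑ n ∈ S, v n * f n ^ 2 := by
        rw [mul_assoc, Finset.mul_sum S _ B]
        congr 1
        refine Finset.sum_congr rfl fun n _ => ?_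
        have := (hq n).ne'
        field_simp

end SchurTest

section PowerSums

theorem sum_Ico_add_one_rpow_le {r : ℝ} (hr : r ≤ 0) (hr' : r ≠ -1) {a b : ℕ} (ha : 1 ≤ a)
    (hab : a ≤ b) :
    ∑ n ∈ Finset.Ico a b, ((n : ℝ) + 1) ^ r
      ≤ ((b : ℝ) ^ (r + 1) - (a : ℝ) ^ (r + 1)) / (r + 1) := by
  have ha' : (0 : ℝ) < a := by exact_mod_cast ha
  have hab' : (a : ℝ) ≤ b := by exact_mod_cast hab
  have hanti : AntitoneOn (fun x : ℝ => x ^ r) (Set.Icc a b) := fun x hx y _ hxy =>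
    rpow_le_rpow_of_nonpos (ha'.trans_le hx.1) hxy hr
  have hzero : (0 : ℝ) ∉ Set.uIcc (a : ℝ) b := by
    rw [Set.uIcc_of_le hab']
    exact fun h => ha'.not_ge h.1
  rw [← integral_rpow (Or.inr ⟨hr', hzero⟩)]
  exact_mod_cast hanti.sum_le_integral_Ico hab

theorem sum_range_add_one_rpow_neg_le {α : ℝ} (h0 : 0 ≤ α) (h1 : α < 1) (N : ℕ) :
    ∑ n ∈ Finset.range N, ((n : ℝ) + 1) ^ (-α) ≤ (N : ℝ) ^ (1 - α) / (1 - α) := by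
  rcases N.eq_zero_or_pos with rfl | hN
  · simp [(sub_pos.2 h1).ne']
  have htail := sum_Ico_add_one_rpow_le (neg_nonpos.2 h0) (by linarith : -α ≠ -1) le_rfl hN
  rw [neg_add_eq_sub, Nat.cast_one, one_rpow, sub_div] at htail
  have hone : 1 ≤ 1 / (1 - α) := by
    rw [le_div_iff₀ (by linarith)]
    linarith
  rw [Finset.range_eq_Ico, Finset.sum_eq_sum_Ico_succ_bot hN, Nat.cast_zero, zero_add, one_rpow]
  linarith

theorem sum_Ico_add_one_rpow_neg_sub_one_le {α : ℝ} (h0 : 0 < α) {a b : ℕ} (ha : 1 ≤ a)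
    (hab : a ≤ b) :
    ∑ n ∈ Finset.Ico a b, ((n : ℝ) + 1) ^ (-α - 1) ≤ (a : ℝ) ^ (-α) / α := by
  have h := sum_Ico_add_one_rpow_le (by linarith : -α - 1 ≤ 0) (by linarith) ha hab
  rw [sub_add_cancel, div_neg, ← neg_div, neg_sub] at h
  refine h.trans ?_
  gcongr
  exact sub_le_self _ (by positivity)

end PowerSums

/-- The Hilbert matrix, used to dominate commutators with power weights. The shift by one in each
index matches the weights `(n + 1) ^ s`: the entries are homogeneous of degree `-1` in `m + 1` and
`n + 1`. -/
noncomputable def hilbertMatrix (m n : ℕ) : ℝ := (((m : ℝ) + 1) + (n + 1))⁻¹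

namespace hilbertMatrix

theorem nonneg (m n : ℕ) : 0 ≤ hilbertMatrix m n := by
  unfold hilbertMatrix
  positivity

theorem comm (m n : ℕ) : hilbertMatrix m n = hilbertMatrix n m := by
  rw [hilbertMatrix, hilbertMatrix, add_comm]

theorem le_inv_add_one (m n : ℕ) : hilbertMatrix m n ≤ ((m : ℝ) + 1)⁻¹ :=
  inv_anti₀ (by positivity) (le_add_of_nonneg_right (by positivity))

theorem sum_range_mul_rpow_neg_le {α : ℝ} (h0 : 0 ≤ α) (h1 : α < 1) (m : ℕ) :
    ∑ n ∈ Finset.range (m + 1), hilbertMatrix m n * ((n : ℝ) + 1) ^ (-α)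
      ≤ 1 / (1 - α) * ((m : ℝ) + 1) ^ (-α) := by
  have hm : (0 : ℝ) < m + 1 := by positivity
  have hsum := sum_range_add_one_rpow_neg_le h0 h1 (m + 1)
  push_cast at hsum
  calc _ ≤ ∑ n ∈ Finset.range (m + 1), ((m : ℝ) + 1)⁻¹ * ((n : ℝ) + 1) ^ (-α) := by
        gcongr with n
        exact le_inv_add_one m n
    _ ≤ ((m : ℝ) + 1)⁻¹ * (((m : ℝ) + 1) ^ (1 - α) / (1 - α)) := by
        rw [← Finset.mul_sum]
        gcongr
    _ = 1 / (1 - α) * ((m : ℝ) + 1) ^ (-α) := by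
        rw [sub_eq_add_neg 1 α, rpow_add hm, rpow_one]
        field_simp

theorem sum_Ico_mul_rpow_neg_le {α : ℝ} (h0 : 0 < α) {m N : ℕ} (hmN : m + 1 ≤ N) :
    ∑ n ∈ Finset.Ico (m + 1) N, hilbertMatrix m n * ((n : ℝ) + 1) ^ (-α)
      ≤ 1 / α * ((m : ℝ) + 1) ^ (-α) := by
  have hsum := sum_Ico_add_one_rpow_neg_sub_one_le h0 (Nat.le_add_left 1 m) hmN
  push_cast at hsum
  calc _ ≤ ∑ n ∈ Finset.Ico (m + 1) N, ((n : ℝ) + 1) ^ (-α - 1) := by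
        gcongr with n
        rw [rpow_sub_one (by positivity), div_eq_inv_mul, comm]
        gcongr
        exact le_inv_add_one n m
    _ ≤ 1 / α * ((m : ℝ) + 1) ^ (-α) := by rwa [one_div_mul_eq_div]

theorem sum_mul_rpow_neg_le {α : ℝ} (h0 : 0 < α) (h1 : α < 1) (m : ℕ) (S : Finset ℕ) :
    ∑ n ∈ S, hilbertMatrix m n * ((n : ℝ) + 1) ^ (-α)
      ≤ (1 / (1 - α) + 1 / α) * ((m : ℝ) + 1) ^ (-α) := by
  obtain ⟨N, hN⟩ := S.exists_nat_subset_range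
  have hmN : m + 1 ≤ max N (m + 1) := le_max_right _ _
  have hsub : S ⊆ Finset.range (max N (m + 1)) :=
    hN.trans (Finset.range_subset_range.2 (le_max_left _ _))
  calc _ ≤ ∑ n ∈ Finset.range (max N (m + 1)), hilbertMatrix m n * ((n : ℝ) + 1) ^ (-α) :=
        Finset.sum_le_sum_of_subset_of_nonneg hsub fun n _ _ =>
          mul_nonneg (nonneg m n) (by positivity)
    _ ≤ (1 / (1 - α) + 1 / α) * ((m : ℝ) + 1) ^ (-α) := by
        rw [← Finset.sum_range_add_sum_Ico _ hmN, add_mul]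
        exact add_le_add (sum_range_mul_rpow_neg_le h0.le h1 m) (sum_Ico_mul_rpow_neg_le h0 hmN)

theorem sum_rpow_mul_sq_le {s : ℝ} (hs : |s| < 1 / 2) (f : ℕ → ℝ) (S M : Finset ℕ) :
    ∑ m ∈ M, ((m : ℝ) + 1) ^ (2 * s) * (∑ n ∈ S, hilbertMatrix m n * f n) ^ 2
      ≤ (1 / (1 / 2 - s) + 1 / (1 / 2 + s)) ^ 2
        * ∑ n ∈ S, ((n : ℝ) + 1) ^ (2 * s) * f n ^ 2 := by
  obtain ⟨hs₁, hs₂⟩ := abs_lt.1 hs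
  have hadd : 0 < 1 / 2 + s := by linarith
  have hsub : 0 < 1 / 2 - s := by linarith
  have hweight : ∀ n : ℕ, ((n : ℝ) + 1) ^ (2 * s) * ((n : ℝ) + 1) ^ (-(1 / 2 + s))
      = ((n : ℝ) + 1) ^ (-(1 / 2 - s)) := fun n => by
    rw [← rpow_add (by positivity)]
    ring_nf
  rw [sq]
  refine schur_test (p := fun m : ℕ => ((m : ℝ) + 1) ^ (-(1 / 2 + s)))
    (q := fun n : ℕ => ((n : ℝ) + 1) ^ (-(1 / 2 + s))) nonneg (fun n => by positivity)
    (fun m => by positivity) (by positivity) (fun m => ?_) (fun n => ?_) f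
  · convert sum_mul_rpow_neg_le hadd (by linarith) m S using 3
    ring
  · simp_rw [hweight, comm _ n]
    convert sum_mul_rpow_neg_le hsub (by linarith) n M using 2
    ring

end hilbertMatrix

section Commutator

theorem rpow_two_mul_eq_sq {x : ℝ} (hx : 0 ≤ x) (r : ℝ) : x ^ (2 * r) = (x ^ r) ^ 2 := by
  rw [mul_comm, rpow_mul hx, rpow_two]

theorem abs_rpow_sub_rpow_mul_add_le {s x y : ℝ} (hs : |s| ≤ 1) (hx : 0 < x) (hy : 0 < y) :
    |x ^ s - y ^ s| * (x + y) ≤ |x - y| * (x ^ s + y ^ s) := by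
  wlog hyx : y ≤ x generalizing x y
  · rw [abs_sub_comm, abs_sub_comm x, add_comm x, add_comm (x ^ s)]
    exact this hy hx (le_of_not_ge hyx)
  obtain ⟨hs₁, hs₂⟩ := abs_le.1 hs
  have hincr : y ^ s * y ≤ x ^ s * x := by
    rw [← rpow_add_one hx.ne', ← rpow_add_one hy.ne']
    exact rpow_le_rpow hy.le hyx (by linarith)
  have hdecr : x ^ s * y ≤ y ^ s * x := by
    rw [← div_le_div_iff₀ hx hy, ← rpow_sub_one hx.ne', ← rpow_sub_one hy.ne']
    exact rpow_le_rpow_of_nonpos hy hyx (by linarith)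
  rw [abs_of_nonneg (sub_nonneg.2 hyx), ← abs_of_pos (add_pos hx hy), ← abs_mul, abs_le]
  constructor <;> linarith

variable {K : ℕ → ℕ → ℝ} {A B s : ℝ}

theorem abs_rpow_sub_rpow_mul_abs_le (hs : |s| ≤ 1)
    (hB : ∀ m n : ℕ, |(m : ℝ) - n| * |K m n| ≤ B) (m n : ℕ) :
    |((m : ℝ) + 1) ^ s - ((n : ℝ) + 1) ^ s| * |K m n|
      ≤ B * ((((m : ℝ) + 1) ^ s + ((n : ℝ) + 1) ^ s) * hilbertMatrix m n) := by
  set x : ℝ := (m : ℝ) + 1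
  set y : ℝ := (n : ℝ) + 1
  have hx : 0 < x := by positivity
  have hy : 0 < y := by positivity
  have hxy : x - y = m - n := add_sub_add_right_eq_sub _ _ _
  rw [hilbertMatrix, ← div_eq_mul_inv, mul_div_assoc', le_div_iff₀ (add_pos hx hy)]
  calc |x ^ s - y ^ s| * |K m n| * (x + y) = |x ^ s - y ^ s| * (x + y) * |K m n| := by ring
    _ ≤ |x - y| * (x ^ s + y ^ s) * |K m n| :=
        mul_le_mul_of_nonneg_right (abs_rpow_sub_rpow_mul_add_le hs hx hy) (abs_nonneg _)
    _ = |(m : ℝ) - n| * |K m n| * (x ^ s + y ^ s) := by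
        rw [hxy]
        ring
    _ ≤ B * (x ^ s + y ^ s) := by
        gcongr
        exact hB m n

theorem rpow_mul_abs_sum_le (hs : |s| ≤ 1) (hB : ∀ m n : ℕ, |(m : ℝ) - n| * |K m n| ≤ B)
    (a : ℕ → ℝ) (S : Finset ℕ) (m : ℕ) :
    ((m : ℝ) + 1) ^ s * |∑ n ∈ S, K m n * a n|
      ≤ |∑ n ∈ S, K m n * (((n : ℝ) + 1) ^ s * a n)|
        + B * (((m : ℝ) + 1) ^ s * ∑ n ∈ S, hilbertMatrix m n * |a n|
          + ∑ n ∈ S, hilbertMatrix m n * (((n : ℝ) + 1) ^ s * |a n|)) := by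
  set ω : ℕ → ℝ := fun n => ((n : ℝ) + 1) ^ s
  have hω : 0 ≤ ω m := by positivity
  have hsplit : ω m * ∑ n ∈ S, K m n * a n
      = ∑ n ∈ S, K m n * (ω n * a n) + ∑ n ∈ S, (ω m - ω n) * K m n * a n := by
    rw [Finset.mul_sum, ← Finset.sum_add_distrib]
    exact Finset.sum_congr rfl fun n _ => by ring
  have hcomm : |∑ n ∈ S, (ω m - ω n) * K m n * a n|
      ≤ B * (ω m * ∑ n ∈ S, hilbertMatrix m n * |a n|
        + ∑ n ∈ S, hilbertMatrix m n * (ω n * |a n|)) :=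
    calc _ ≤ ∑ n ∈ S, |ω m - ω n| * |K m n| * |a n| := by
          simpa only [abs_mul] using
            Finset.abs_sum_le_sum_abs (fun n => (ω m - ω n) * K m n * a n) S
      _ ≤ ∑ n ∈ S, B * ((ω m + ω n) * hilbertMatrix m n) * |a n| :=
          Finset.sum_le_sum fun n _ => mul_le_mul_of_nonneg_right
            (abs_rpow_sub_rpow_mul_abs_le hs hB m n) (abs_nonneg _)
      _ = _ := by
          rw [Finset.mul_sum, ← Finset.sum_add_distrib, Finset.mul_sum]
          exact Finset.sum_congr rfl fun n _ => by ring
  calc ω m * |∑ n ∈ S, K m n * a n| = |ω m * ∑ n ∈ S, K m n * a n| := by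
        rw [abs_mul, abs_of_nonneg hω]
    _ ≤ |∑ n ∈ S, K m n * (ω n * a n)| + |∑ n ∈ S, (ω m - ω n) * K m n * a n| := by
        rw [hsplit]
        exact abs_add_le _ _
    _ ≤ _ := by gcongr

theorem rpow_mul_sq_sum_le (hs : |s| ≤ 1) (hB : ∀ m n : ℕ, |(m : ℝ) - n| * |K m n| ≤ B)
    (a : ℕ → ℝ) (S : Finset ℕ) (m : ℕ) :
    ((m : ℝ) + 1) ^ (2 * s) * (∑ n ∈ S, K m n * a n) ^ 2
      ≤ 3 * ((∑ n ∈ S, K m n * (((n : ℝ) + 1) ^ s * a n)) ^ 2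
        + B ^ 2 * (((m : ℝ) + 1) ^ (2 * s) * (∑ n ∈ S, hilbertMatrix m n * |a n|) ^ 2
          + (∑ n ∈ S, hilbertMatrix m n * (((n : ℝ) + 1) ^ s * |a n|)) ^ 2)) := by
  have hsq : ∀ x y z : ℝ, (|x| + B * (y + z)) ^ 2 ≤ 3 * (x ^ 2 + B ^ 2 * (y ^ 2 + z ^ 2)) := by
    intro x y z
    rw [← sq_abs x]
    linarith [sq_nonneg (|x| - B * y), sq_nonneg (|x| - B * z), sq_nonneg (B * y - B * z)]
  have h := pow_le_pow_left₀ (by positivity) (rpow_mul_abs_sum_le hs hB a S m) 2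
  rw [mul_pow, sq_abs, ← rpow_two_mul_eq_sq (by positivity)] at h
  refine (h.trans (hsq _ _ _)).trans_eq ?_
  rw [mul_pow, ← rpow_two_mul_eq_sq (by positivity)]

theorem sum_rpow_mul_sq_le_of_abs_sub_mul_abs_le (hs : |s| < 1 / 2)
    (hA : ∀ (f : ℕ → ℝ) (S M : Finset ℕ),
      ∑ m ∈ M, (∑ n ∈ S, K m n * f n) ^ 2 ≤ A * ∑ n ∈ S, f n ^ 2)
    (hB : ∀ m n : ℕ, |(m : ℝ) - n| * |K m n| ≤ B) (a : ℕ → ℝ) (S M : Finset ℕ) :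
    ∑ m ∈ M, ((m : ℝ) + 1) ^ (2 * s) * (∑ n ∈ S, K m n * a n) ^ 2
      ≤ 3 * (A + B ^ 2 * ((1 / (1 / 2 - s) + 1 / (1 / 2 + s)) ^ 2 + 4 ^ 2))
        * ∑ n ∈ S, ((n : ℝ) + 1) ^ (2 * s) * a n ^ 2 := by
  set ω : ℕ → ℝ := fun n => ((n : ℝ) + 1) ^ s
  set G := ∑ n ∈ S, ((n : ℝ) + 1) ^ (2 * s) * a n ^ 2
  have hGω : ∑ n ∈ S, ω n ^ 2 * a n ^ 2 = G :=
    Finset.sum_congr rfl fun n _ => by rw [rpow_two_mul_eq_sq (by positivity)]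
  have hK : ∑ m ∈ M, (∑ n ∈ S, K m n * (ω n * a n)) ^ 2 ≤ A * G := by
    simpa only [mul_pow, hGω] using hA (fun n => ω n * a n) S M
  have hHs : ∑ m ∈ M, ((m : ℝ) + 1) ^ (2 * s) * (∑ n ∈ S, hilbertMatrix m n * |a n|) ^ 2
      ≤ (1 / (1 / 2 - s) + 1 / (1 / 2 + s)) ^ 2 * G := by
    simpa only [sq_abs] using hilbertMatrix.sum_rpow_mul_sq_le hs (fun n => |a n|) S M
  have hH0 : ∑ m ∈ M, (∑ n ∈ S, hilbertMatrix m n * (ω n * |a n|)) ^ 2 ≤ 4 ^ 2 * G := by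
    have h := hilbertMatrix.sum_rpow_mul_sq_le (s := 0) (by norm_num) (fun n => ω n * |a n|) S M
    simp only [mul_zero, rpow_zero, one_mul, mul_pow, sq_abs, hGω] at h
    exact h.trans_eq (by norm_num)
  calc _ ≤ 3 * (A * G + B ^ 2 * ((1 / (1 / 2 - s) + 1 / (1 / 2 + s)) ^ 2 * G + 4 ^ 2 * G)) := by
        refine (Finset.sum_le_sum fun m _ =>
          rpow_mul_sq_sum_le (hs.le.trans (by norm_num)) hB a S m).trans ?_
        simp only [← Finset.mul_sum, Finset.sum_add_distrib]
        gcongr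
    _ = _ := by ring

end Commutator

section OrthogonalFamilies

variable {ι : Type*} {u : ι → ℝ → ℝ} {f : ℝ → ℝ} {a b c : ℝ}

theorem integral_sum_mul (hu : ∀ i, Continuous (u i)) (hf : Continuous f) (w : ι → ℝ)
    (S : Finset ι) :
    ∫ t in a..b, (∑ i ∈ S, w i * u i t) * f t = ∑ i ∈ S, w i * ∫ t in a..b, u i t * f t := by
  simp_rw [Finset.sum_mul, mul_assoc]
  rw [intervalIntegral.integral_finsetSum
    fun i _ => Continuous.intervalIntegrable (by fun_prop) _ _]
  simp_rw [intervalIntegral.integral_const_mul]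

theorem integral_sum_sq_le_of_orthogonal (hu : ∀ i, Continuous (u i))
    (horth : Pairwise fun i j => ∫ t in a..b, u i t * u j t = 0)
    (hc : ∀ i, ∫ t in a..b, u i t ^ 2 ≤ c) (w : ι → ℝ) (S : Finset ι) :
    ∫ t in a..b, (∑ i ∈ S, w i * u i t) ^ 2 ≤ c * ∑ i ∈ S, w i ^ 2 := by
  have hcoeff : ∀ i ∈ S, ∫ t in a..b, u i t * ∑ j ∈ S, w j * u j t
      = w i * ∫ t in a..b, u i t ^ 2 := by
    intro i hi
    simp_rw [mul_comm (u i _)]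
    rw [integral_sum_mul hu (hu i), Finset.sum_eq_single_of_mem i hi
      fun j _ hji => by rw [horth hji, mul_zero]]
    simp_rw [sq]
  simp_rw [sq (∑ i ∈ S, w i * u i _)]
  rw [integral_sum_mul hu (by fun_prop), Finset.mul_sum]
  refine Finset.sum_le_sum fun i hi => ?_
  rw [hcoeff i hi, ← mul_assoc, ← sq, mul_comm]
  exact mul_le_mul_of_nonneg_right (hc i) (sq_nonneg _)

theorem sum_sq_integral_mul_le_of_orthogonal (hab : a ≤ b) (hu : ∀ i, Continuous (u i))
    (horth : Pairwise fun i j => ∫ t in a..b, u i t * u j t = 0)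
    (hc : ∀ i, ∫ t in a..b, u i t ^ 2 ≤ c) (hc0 : 0 < c) (hf : Continuous f) (S : Finset ι) :
    ∑ i ∈ S, (∫ t in a..b, u i t * f t) ^ 2 ≤ c * ∫ t in a..b, f t ^ 2 := by
  set w : ι → ℝ := fun i => ∫ t in a..b, u i t * f t
  set g : ℝ → ℝ := fun t => ∑ i ∈ S, w i * u i t with hg
  have hgcont : Continuous g := by fun_prop
  have hgf : ∫ t in a..b, g t * f t = ∑ i ∈ S, w i ^ 2 := by
    rw [hg, integral_sum_mul hu hf]
    exact Finset.sum_congr rfl fun i _ => (sq _).symm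
  have hgg : ∫ t in a..b, g t ^ 2 ≤ c * ∑ i ∈ S, w i ^ 2 :=
    integral_sum_sq_le_of_orthogonal hu horth hc w S
  have hexpand : ∫ t in a..b, (c * f t - g t) ^ 2 = c ^ 2 * (∫ t in a..b, f t ^ 2)
      - 2 * c * (∫ t in a..b, g t * f t) + ∫ t in a..b, g t ^ 2 := by
    simp_rw [← intervalIntegral.integral_const_mul]
    rw [← intervalIntegral.integral_sub, ← intervalIntegral.integral_add]
    · exact intervalIntegral.integral_congr fun t _ => by ring
    all_goals exact Continuous.intervalIntegrable (by fun_prop) _ _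
  have hpos : 0 ≤ ∫ t in a..b, (c * f t - g t) ^ 2 :=
    intervalIntegral.integral_nonneg hab fun t _ => sq_nonneg _
  refine le_of_mul_le_mul_left ?_ hc0
  rw [hexpand, hgf] at hpos
  linarith

end OrthogonalFamilies

section TrigonometricIntegrals

theorem integral_cos_int_mul {k : ℤ} (hk : k ≠ 0) : ∫ t in (0 : ℝ)..π, cos (k * t) = 0 := by
  rw [intervalIntegral.integral_comp_mul_left (fun t => cos t) (Int.cast_ne_zero.2 hk)]
  simp [sin_int_mul_pi]

theorem abs_mul_abs_integral_sin_mul_le (k : ℝ) : |k| * |∫ t in (0 : ℝ)..π, sin (k * t)| ≤ 2 := by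
  rw [← abs_mul, intervalIntegral.mul_integral_comp_mul_left, integral_sin, mul_zero, cos_zero,
    abs_le]
  constructor <;> linarith [cos_le_one (k * π), neg_one_le_cos (k * π)]

theorem pairwise_integral_cos_mul_cos :
    Pairwise fun m n : ℕ => ∫ t in (0 : ℝ)..π, cos (m * t) * cos (n * t) = 0 := by
  intro m n hmn
  have hprod : ∀ t : ℝ, cos (m * t) * cos (n * t)
      = (cos (((m - n : ℤ) : ℝ) * t) + cos (((m + n : ℤ) : ℝ) * t)) / 2 := fun t => by
    push_cast
    rw [sub_mul, add_mul, ← two_mul_cos_mul_cos]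
    ring
  simp_rw [hprod]
  rw [intervalIntegral.integral_div, intervalIntegral.integral_add
    (Continuous.intervalIntegrable (by fun_prop) _ _)
    (Continuous.intervalIntegrable (by fun_prop) _ _),
    integral_cos_int_mul (by lia), integral_cos_int_mul (by lia), add_zero, zero_div]

theorem pairwise_integral_sin_mul_sin :
    Pairwise fun m n : ℕ => ∫ t in (0 : ℝ)..π, sin (m * t) * sin (n * t) = 0 := by
  intro m n hmn
  have hprod : ∀ t : ℝ, sin (m * t) * sin (n * t)
      = (cos (((m - n : ℤ) : ℝ) * t) - cos (((m + n : ℤ) : ℝ) * t)) / 2 := fun t => by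
    push_cast
    rw [sub_mul, add_mul, ← two_mul_sin_mul_sin]
    ring
  simp_rw [hprod]
  rw [intervalIntegral.integral_div, intervalIntegral.integral_sub
    (Continuous.intervalIntegrable (by fun_prop) _ _)
    (Continuous.intervalIntegrable (by fun_prop) _ _),
    integral_cos_int_mul (by lia), integral_cos_int_mul (by lia), sub_zero, zero_div]

theorem integral_sq_le_sub {u : ℝ → ℝ} {a b : ℝ} (hab : a ≤ b) (hu : Continuous u)
    (hu1 : ∀ t, |u t| ≤ 1) : ∫ t in a..b, u t ^ 2 ≤ b - a :=
  calc ∫ t in a..b, u t ^ 2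
      ≤ ∫ _ in a..b, (1 : ℝ) :=
        intervalIntegral.integral_mono hab ((hu.pow 2).intervalIntegrable _ _)
          intervalIntegrable_const fun t => (sq_le_one_iff_abs_le_one _).2 (hu1 t)
    _ = b - a := integral_one

end TrigonometricIntegrals

/-- The matrix that maps the cosine coefficients of an even trigonometric polynomial to the sine
coefficients of its restriction to `[0, π]`, without the normalizing factor `2 / π` of the latter.
Rows are indexed by the frequency `m` of the sine. -/
noncomputable def sineCosineMatrix (m n : ℕ) : ℝ := ∫ t in (0 : ℝ)..π, cos (n * t) * sin (m * t)

namespace sineCosineMatrix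

theorem abs_sub_mul_abs_le (m n : ℕ) : |(m : ℝ) - n| * |sineCosineMatrix m n| ≤ 2 := by
  set I : ℝ → ℝ := fun k => ∫ t in (0 : ℝ)..π, sin (k * t)
  have hsplit : 2 * sineCosineMatrix m n = I (m - n) + I (m + n) := by
    rw [sineCosineMatrix, ← intervalIntegral.integral_const_mul, ← intervalIntegral.integral_add
      (Continuous.intervalIntegrable (by fun_prop) _ _)
      (Continuous.intervalIntegrable (by fun_prop) _ _)]
    refine intervalIntegral.integral_congr fun t _ => ?_
    rw [sub_mul, add_mul, ← two_mul_sin_mul_cos]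
    ring
  have habs : |(m : ℝ) - n| ≤ |(m : ℝ) + n| := by
    rw [abs_of_nonneg (by positivity : (0 : ℝ) ≤ m + n), abs_le]
    constructor <;> linarith [m.cast_nonneg (α := ℝ), n.cast_nonneg (α := ℝ)]
  have htwo : 2 * (|(m : ℝ) - n| * |sineCosineMatrix m n|) ≤ 2 + 2 :=
    calc _ = |(m : ℝ) - n| * |I (m - n) + I (m + n)| := by
          rw [← hsplit, abs_mul, abs_two]
          ring
      _ ≤ |(m : ℝ) - n| * |I (m - n)| + |(m : ℝ) - n| * |I (m + n)| := by
          rw [← mul_add]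
          gcongr
          exact abs_add_le _ _
      _ ≤ |(m : ℝ) - n| * |I (m - n)| + |(m : ℝ) + n| * |I (m + n)| := by gcongr
      _ ≤ 2 + 2 :=
          add_le_add (abs_mul_abs_integral_sin_mul_le _) (abs_mul_abs_integral_sin_mul_le _)
  linarith

theorem integral_sum_cos_mul_sin (a : ℕ → ℝ) (S : Finset ℕ) (m : ℕ) :
    ∫ t in (0 : ℝ)..π, (∑ n ∈ S, a n * cos (n * t)) * sin (m * t)
      = ∑ n ∈ S, sineCosineMatrix m n * a n := by
  rw [integral_sum_mul (fun n => by fun_prop) (by fun_prop)]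
  exact Finset.sum_congr rfl fun n _ => mul_comm _ _

theorem sum_sq_le (a : ℕ → ℝ) (S M : Finset ℕ) :
    ∑ m ∈ M, (∑ n ∈ S, sineCosineMatrix m n * a n) ^ 2 ≤ π ^ 2 * ∑ n ∈ S, a n ^ 2 := by
  have hcos : ∀ n : ℕ, ∫ t in (0 : ℝ)..π, cos (n * t) ^ 2 ≤ π := fun n => by
    simpa using integral_sq_le_sub pi_pos.le (by fun_prop) fun t => abs_cos_le_one (n * t)
  have hsin : ∀ m : ℕ, ∫ t in (0 : ℝ)..π, sin (m * t) ^ 2 ≤ π := fun m => by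
    simpa using integral_sq_le_sub pi_pos.le (by fun_prop) fun t => abs_sin_le_one (m * t)
  set f : ℝ → ℝ := fun t => ∑ n ∈ S, a n * cos (n * t)
  calc ∑ m ∈ M, (∑ n ∈ S, sineCosineMatrix m n * a n) ^ 2
      = ∑ m ∈ M, (∫ t in (0 : ℝ)..π, sin (m * t) * f t) ^ 2 := by
        simp_rw [← integral_sum_cos_mul_sin, mul_comm (sin _)]
        rfl
    _ ≤ π * ∫ t in (0 : ℝ)..π, f t ^ 2 :=
        sum_sq_integral_mul_le_of_orthogonal pi_pos.le (fun m => by fun_prop)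
          pairwise_integral_sin_mul_sin hsin pi_pos (by fun_prop) M
    _ ≤ π * (π * ∑ n ∈ S, a n ^ 2) := by
        gcongr
        exact integral_sum_sq_le_of_orthogonal (fun n => by fun_prop)
          pairwise_integral_cos_mul_cos hcos a S
    _ = π ^ 2 * ∑ n ∈ S, a n ^ 2 := by ring

end sineCosineMatrix

theorem rpow_le_two_mul_add_one_rpow {x r : ℝ} (hx : 1 ≤ x) (hr : -1 ≤ r) :
    x ^ r ≤ 2 * (x + 1) ^ r := by
  have hx0 : 0 < x := by linarith
  rw [← div_le_iff₀ (by positivity), ← div_rpow hx0.le (by positivity)]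
  calc (x / (x + 1)) ^ r ≤ (x / (x + 1)) ^ (-1 : ℝ) :=
        rpow_le_rpow_of_exponent_ge (by positivity)
          (div_le_one_of_le₀ (by linarith) (by positivity)) hr
    _ ≤ 2 := by
        rw [rpow_neg_one, inv_div, div_le_iff₀ hx0]
        linarith

theorem stmt6_general (s : ℝ) (hs : |s| < 1 / 2) :
    ∃ C > 0, ∀ (a : ℕ → ℝ) (S M : Finset ℕ), (∀ m ∈ M, 1 ≤ m) →
      ∑ m ∈ M, (m : ℝ) ^ (2 * s) *
          ((2 / π) * ∫ t in (0 : ℝ)..π, (∑ n ∈ S, a n * cos (n * t)) * sin (m * t)) ^ 2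
        ≤ C * ∑ n ∈ S, (1 + (n : ℝ)) ^ (2 * s) * a n ^ 2 := by
  set C := 3 * (π ^ 2 + 2 ^ 2 * ((1 / (1 / 2 - s) + 1 / (1 / 2 + s)) ^ 2 + 4 ^ 2))
  refine ⟨2 * (2 / π) ^ 2 * C, by positivity, fun a S M hM => ?_⟩
  simp_rw [sineCosineMatrix.integral_sum_cos_mul_sin, add_comm (1 : ℝ)]
  calc ∑ m ∈ M, (m : ℝ) ^ (2 * s) * (2 / π * ∑ n ∈ S, sineCosineMatrix m n * a n) ^ 2
      ≤ ∑ m ∈ M, 2 * ((m : ℝ) + 1) ^ (2 * s)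
          * (2 / π * ∑ n ∈ S, sineCosineMatrix m n * a n) ^ 2 := by
        gcongr with m hm
        exact rpow_le_two_mul_add_one_rpow (by exact_mod_cast hM m hm)
          (by linarith [(abs_lt.1 hs).1])
    _ = 2 * (2 / π) ^ 2
          * ∑ m ∈ M, ((m : ℝ) + 1) ^ (2 * s) * (∑ n ∈ S, sineCosineMatrix m n * a n) ^ 2 := by
        rw [Finset.mul_sum]
        exact Finset.sum_congr rfl fun m _ => by ring
    _ ≤ 2 * (2 / π) ^ 2 * (C * ∑ n ∈ S, ((n : ℝ) + 1) ^ (2 * s) * a n ^ 2) := by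
        gcongr
        exact sum_rpow_mul_sq_le_of_abs_sub_mul_abs_le hs sineCosineMatrix.sum_sq_le
          sineCosineMatrix.abs_sub_mul_abs_le a S M
    _ = _ := (mul_assoc _ _ _).symm

/-- Restriction from the periodic Sobolev space `H^s` to the Dirichlet Sobolev
space `H^s₀` is bounded for `0 ≤ s < 1/2`, expressed in Fourier coefficients:
for an even trigonometric polynomial `f(t) = ∑ a_n cos(nt)`, the sine
coefficients `b_m = (2/π)∫₀^π f(t) sin(mt) dt` of its restriction to `[0,π]`
satisfy `∑ m^{2s} b_m² ≤ C ∑ (1+n)^{2s} a_n²`. -/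
theorem stmt6 (s : ℝ) (hs0 : 0 ≤ s) (hs : s < 1 / 2) :
    ∃ C > 0, ∀ a : ℕ → ℝ, ∀ ha : (Function.support a).Finite,
      ∀ M : Finset ℕ, (∀ m ∈ M, 1 ≤ m) →
        ∑ m ∈ M, (m : ℝ) ^ (2 * s) *
            ((2 / π) * ∫ t in (0:ℝ)..π,
              (∑ n ∈ ha.toFinset, a n * Real.cos (n * t)) * Real.sin (m * t)) ^ 2
          ≤ C * ∑ n ∈ ha.toFinset, (1 + (n : ℝ)) ^ (2 * s) * (a n) ^ 2 := by
  obtain ⟨C, hC, h⟩ := stmt6_general s (abs_lt.2 ⟨by linarith, hs⟩)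
  exact ⟨C, hC, fun a ha M hM => h a ha.toFinset M hM⟩
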